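/- For every CNF formula φ in which every clause has at most 3 literals, there exist a CNF formula ψ in NAS-CNF form and a bound N (all variables of φ having index < N, all fresh variables of ψ having index ≥ N) such that for every assignment σ : ℕ → Bool: σ satisfies φ if and only if there exists an assignment σ' agreeing with σ on all indices < N that satisfies ψ. (The reduction preserves satisfying assignments on the original variables, not merely satisfiability.) -/

import Mathlib

/-!
Each clause of `φ` is replaced by a gadget on nine fresh variables. The clause is first padded by
repetition to exactly three literals `a, b, c`. Fresh literals `p₀, p₁, ¬p₂` form the mixed
3-clause `p₀ ∨ p₁ ∨ ¬p₂`, and each of them is made to imply the corresponding one of `a, b, c`.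

To express that a fresh literal `P` implies an original literal `l`, a copy `Q` of `l` is used
together with a fresh literal `S` of the same polarity as `P` that is forced to be false:
`l ∨ ¬Q`, `¬P ∨ Q ∨ S` and `¬S`. The first two clauses contain both polarities whatever the
polarities of `l` and `P` are, and the only 3-clause uses fresh variables only. Hence no literal
occurs in two 3-clauses, neither inside one gadget (`countP_gadget_le`) nor across gadgets
(`countP_build_le`). Satisfaction of a gadget yields satisfaction of its clause (`gadget_sound`),
and an assignment satisfying the clause extends to the fresh variables (`gadget_complete`).
-/

/-- A literal is a variable index together with a polarity:
`(i, true)` is the positive literal `xᵢ`, `(i, false)` is `¬xᵢ`. -/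
abbrev Lit : Type := ℕ × Bool

/-- A clause is a finite list of literals. -/
abbrev Clause : Type := List Lit

/-- A CNF formula is a finite list of clauses. -/
abbrev CNF : Type := List Clause

/-- A clause is satisfied by `σ` if some literal in it evaluates to true. -/
def ClauseSat (σ : ℕ → Bool) (c : Clause) : Prop := ∃ l ∈ c, σ l.1 = l.2

/-- A CNF formula is satisfied by `σ` if every clause is satisfied. -/
def CNFSat (σ : ℕ → Bool) (φ : CNF) : Prop := ∀ c ∈ φ, ClauseSat σ c

/-- A formula is satisfiable if some assignment satisfies it. -/
def Satisfiable (φ : CNF) : Prop := ∃ σ : ℕ → Bool, CNFSat σ φ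

/-- A CNF formula is in NAS-CNF form if every clause has at most 3 literals,
every clause with at least 2 literals contains a positive and a negative
literal, and every literal appears in at most one clause of size 3. -/
def NASForm (φ : CNF) : Prop :=
  (∀ c ∈ φ, c.length ≤ 3) ∧
  (∀ c ∈ φ, 2 ≤ c.length →
    (∃ l ∈ c, l.2 = true) ∧ (∃ l ∈ c, l.2 = false)) ∧
  (∀ l : Lit, (φ.countP (fun c => decide (c.length = 3 ∧ l ∈ c))) ≤ 1)

/-- Clauses stating that the fresh literal `(m, d)` implies `l`. The variable `m + 3` carries a copy
of `l`, and `m + 6` is forced to the value `!d`. -/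
def linkClauses (m : ℕ) (d : Bool) (l : Lit) : CNF :=
  [[l, (m + 3, !l.2)], [(m, !d), (m + 3, l.2), (m + 6, d)], [(m + 6, !d)]]

/-- The gadget for the clause `a ∨ b ∨ c`, with fresh variables `m, …, m + 8`. -/
def gadget (m : ℕ) (a b c : Lit) : CNF :=
  [(m, true), (m + 1, true), (m + 2, false)] ::
    (linkClauses m true a ++ linkClauses (m + 1) true b ++ linkClauses (m + 2) false c)

/-- The gadget of a clause of at most three literals, padded by repeating its last literal. The
empty clause is kept; the value on clauses of more than three literals is irrelevant. -/
def clauseGadget (m : ℕ) : Clause → CNF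
  | [] => [[]]
  | [a] => gadget m a a a
  | [a, b] => gadget m a b b
  | a :: b :: c :: _ => gadget m a b c

/-- The concatenation of the gadgets of all clauses, using fresh variables from `m` on. -/
def build (m : ℕ) : CNF → CNF
  | [] => []
  | c :: φ => clauseGadget m c ++ build (m + 9) φ

lemma clauseSat_congr {σ τ : ℕ → Bool} {c : Clause} (h : ∀ l ∈ c, τ l.1 = σ l.1)
    (hc : ClauseSat σ c) : ClauseSat τ c := by
  obtain ⟨l, hl, e⟩ := hc
  exact ⟨l, hl, (h l hl).trans e⟩

/-- Any two of the four 3-clauses of a gadget are disjoint. -/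
lemma countP_gadget_le (m : ℕ) (a b c l : Lit) :
    (gadget m a b c).countP (fun c => decide (c.length = 3 ∧ l ∈ c)) ≤ 1 := by
  obtain ⟨i, v⟩ := l
  simp only [gadget, linkClauses, List.countP_cons, List.countP_append, List.countP_nil]
  simp
  grind

lemma countP_gadget_eq_zero (m : ℕ) (a b c l : Lit) (h : l.1 < m ∨ m + 9 ≤ l.1) :
    (gadget m a b c).countP (fun c => decide (c.length = 3 ∧ l ∈ c)) = 0 := by
  obtain ⟨i, v⟩ := l
  have h0 : i ≠ m := by grind
  have hne : ∀ k < 9, i ≠ m + k := by grind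
  simp only [gadget, linkClauses, List.countP_cons, List.countP_append, List.countP_nil]
  simp [h0, hne, add_assoc]

lemma countP_clauseGadget (m : ℕ) (c : Clause) (l : Lit) :
    (clauseGadget m c).countP (fun c => decide (c.length = 3 ∧ l ∈ c)) ≤ 1 ∧
    (l.1 < m ∨ m + 9 ≤ l.1 →
      (clauseGadget m c).countP (fun c => decide (c.length = 3 ∧ l ∈ c)) = 0) := by
  match c with
  | [] => simp [clauseGadget]
  | [a] => exact ⟨countP_gadget_le .., countP_gadget_eq_zero _ _ _ _ _⟩
  | [a, b] => exact ⟨countP_gadget_le .., countP_gadget_eq_zero _ _ _ _ _⟩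
  | a :: b :: c :: _ => exact ⟨countP_gadget_le .., countP_gadget_eq_zero _ _ _ _ _⟩

lemma countP_build_eq_zero (φ : CNF) (m : ℕ) (l : Lit) (h : l.1 < m) :
    (build m φ).countP (fun c => decide (c.length = 3 ∧ l ∈ c)) = 0 := by
  induction φ generalizing m with
  | nil => simp [build]
  | cons c φ ih =>
    rw [build, List.countP_append, (countP_clauseGadget m c l).2 (Or.inl h), ih _ (by omega)]

lemma countP_build_le (φ : CNF) (m : ℕ) (l : Lit) :
    (build m φ).countP (fun c => decide (c.length = 3 ∧ l ∈ c)) ≤ 1 := by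
  induction φ generalizing m with
  | nil => simp [build]
  | cons c φ ih =>
    rw [build, List.countP_append]
    obtain h | h := lt_or_ge l.1 (m + 9)
    · rw [countP_build_eq_zero φ _ l h]
      exact (countP_clauseGadget m c l).1
    · rw [(countP_clauseGadget m c l).2 (Or.inr h), zero_add]
      exact ih _

lemma gadget_shape (m : ℕ) (a b c : Lit) : ∀ e ∈ gadget m a b c, e.length ≤ 3 ∧
    (2 ≤ e.length → (∃ l ∈ e, l.2 = true) ∧ (∃ l ∈ e, l.2 = false)) := by
  obtain ⟨i, u⟩ := a
  obtain ⟨j, v⟩ := b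
  obtain ⟨k, w⟩ := c
  cases u <;> cases v <;> cases w <;> simp [gadget, linkClauses]

lemma build_shape (φ : CNF) (m : ℕ) : ∀ e ∈ build m φ, e.length ≤ 3 ∧
    (2 ≤ e.length → (∃ l ∈ e, l.2 = true) ∧ (∃ l ∈ e, l.2 = false)) := by
  induction φ generalizing m with
  | nil => simp [build]
  | cons c φ ih =>
    intro e he
    rw [build, List.mem_append] at he
    obtain he | he := he
    · match c, he with
      | [], he => simp_all [clauseGadget]
      | [a], he => exact gadget_shape _ _ _ _ e he
      | [a, b], he => exact gadget_shape _ _ _ _ e he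
      | a :: b :: c :: _, he => exact gadget_shape _ _ _ _ e he
    · exact ih _ e he

lemma gadget_vars (m : ℕ) (a b c : Lit) (ha : a.1 < m) (hb : b.1 < m) (hc : c.1 < m) :
    ∀ e ∈ gadget m a b c, ∀ l ∈ e, l.1 < m + 9 := by
  intro e he l hl
  simp only [gadget, linkClauses, List.mem_cons, List.mem_append, List.not_mem_nil, or_false] at he
  rcases he with rfl | ((rfl | rfl | rfl) | (rfl | rfl | rfl)) | (rfl | rfl | rfl) <;>
    simp only [List.mem_cons, List.not_mem_nil, or_false] at hl <;> grind

lemma clauseGadget_vars (m : ℕ) (c : Clause) (hc : ∀ l ∈ c, l.1 < m) :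
    ∀ e ∈ clauseGadget m c, ∀ l ∈ e, l.1 < m + 9 := by
  match c with
  | [] => simp [clauseGadget]
  | [a] => exact gadget_vars _ _ _ _ (by simp_all) (by simp_all) (by simp_all)
  | [a, b] => exact gadget_vars _ _ _ _ (by simp_all) (by simp_all) (by simp_all)
  | a :: b :: c :: _ => exact gadget_vars _ _ _ _ (by simp_all) (by simp_all) (by simp_all)

lemma link_sound {σ : ℕ → Bool} {m : ℕ} {d : Bool} {l : Lit} (h : CNFSat σ (linkClauses m d l))
    (hp : σ m = d) : σ l.1 = l.2 := by
  simp [CNFSat, ClauseSat, linkClauses] at h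
  grind

lemma gadget_sound {σ : ℕ → Bool} {m : ℕ} {a b c : Lit} (h : CNFSat σ (gadget m a b c)) :
    σ a.1 = a.2 ∨ σ b.1 = b.2 ∨ σ c.1 = c.2 := by
  have hmain : ClauseSat σ [(m, true), (m + 1, true), (m + 2, false)] := h _ (by simp [gadget])
  have h0 : CNFSat σ (linkClauses m true a) := fun e he => h e (by simp [gadget, he])
  have h1 : CNFSat σ (linkClauses (m + 1) true b) := fun e he => h e (by simp [gadget, he])
  have h2 : CNFSat σ (linkClauses (m + 2) false c) := fun e he => h e (by simp [gadget, he])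
  simp only [ClauseSat, List.mem_cons, List.not_mem_nil, or_false, exists_eq_or_imp,
    exists_eq_left] at hmain
  exact hmain.imp (link_sound h0) (Or.imp (link_sound h1) (link_sound h2))

lemma link_complete {σ : ℕ → Bool} {m : ℕ} {d : Bool} {l : Lit}
    (hp : σ m = if σ l.1 = l.2 then d else !d) (hq : σ (m + 3) = σ l.1)
    (hs : σ (m + 6) = !d) : CNFSat σ (linkClauses m d l) := by
  simp only [CNFSat, ClauseSat, linkClauses, List.mem_cons, List.not_mem_nil, or_false,
    forall_eq_or_imp, forall_eq, exists_eq_or_imp, exists_eq_left, hp, hq, hs]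
  cases σ l.1 <;> cases l.2 <;> cases d <;> simp

lemma gadget_complete (σ : ℕ → Bool) (m : ℕ) (a b c : Lit)
    (ha : a.1 < m) (hb : b.1 < m) (hc : c.1 < m)
    (h : σ a.1 = a.2 ∨ σ b.1 = b.2 ∨ σ c.1 = c.2) :
    ∃ τ : ℕ → Bool, (∀ i < m, τ i = σ i) ∧ CNFSat τ (gadget m a b c) := by
  -- The values on `m, …, m + 8`: truth-indicating literals, copies, and the forced constants.
  let v : List Bool :=
    [if σ a.1 = a.2 then true else false, if σ b.1 = b.2 then true else false,
      if σ c.1 = c.2 then false else true, σ a.1, σ b.1, σ c.1, false, false, true]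
  let τ : ℕ → Bool := fun i => if i < m then σ i else v.getD (i - m) false
  have hlt : ∀ i < m, τ i = σ i := fun i hi => by simp [τ, hi]
  have hge : ∀ k, τ (m + k) = v.getD k false := fun k => by simp [τ]
  have hge0 : τ m = v.getD 0 false := hge 0
  refine ⟨τ, hlt, ?_⟩
  have h0 : CNFSat τ (linkClauses m true a) := by
    apply link_complete
    · rw [hge0, hlt _ ha]; simp [v]
    · rw [hge, hlt _ ha]; simp [v]
    · rw [hge]; simp [v]
  have h1 : CNFSat τ (linkClauses (m + 1) true b) := by
    apply link_complete
    · rw [hge, hlt _ hb]; simp [v]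
    · rw [add_assoc, hge, hlt _ hb]; simp [v]
    · rw [add_assoc, hge]; simp [v]
  have h2 : CNFSat τ (linkClauses (m + 2) false c) := by
    apply link_complete
    · rw [hge, hlt _ hc]; simp [v]
    · rw [add_assoc, hge, hlt _ hc]; simp [v]
    · rw [add_assoc, hge]; simp [v]
  intro e he
  simp only [gadget, List.mem_cons, List.mem_append] at he
  obtain rfl | (he | he) | he := he
  · simp only [ClauseSat, List.mem_cons, List.not_mem_nil, or_false, exists_eq_or_imp,
      exists_eq_left, hge, hge0]
    simpa [v] using h
  · exact h0 e he
  · exact h1 e he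
  · exact h2 e he

lemma clauseGadget_sound {σ : ℕ → Bool} {m : ℕ} {c : Clause} (h : CNFSat σ (clauseGadget m c)) :
    ClauseSat σ c := by
  match c, h with
  | [], h => exact h [] (by simp [clauseGadget])
  | [a], h => simpa [ClauseSat] using gadget_sound h
  | [a, b], h => simpa [ClauseSat] using gadget_sound h
  | a :: b :: c :: _, h =>
    obtain h | h | h := gadget_sound h
    · exact ⟨a, by simp, h⟩
    · exact ⟨b, by simp, h⟩
    · exact ⟨c, by simp, h⟩

lemma clauseGadget_complete (σ : ℕ → Bool) (m : ℕ) (c : Clause) (h3 : c.length ≤ 3)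
    (hc : ∀ l ∈ c, l.1 < m) (h : ClauseSat σ c) :
    ∃ τ : ℕ → Bool, (∀ i < m, τ i = σ i) ∧ CNFSat τ (clauseGadget m c) := by
  match c, h3, h with
  | [], _, h => simp [ClauseSat] at h
  | [a], _, h =>
    exact gadget_complete σ m a a a (by simp_all) (by simp_all) (by simp_all)
      (by simpa [ClauseSat] using h)
  | [a, b], _, h =>
    exact gadget_complete σ m a b b (by simp_all) (by simp_all) (by simp_all)
      (by simpa [ClauseSat] using h)
  | [a, b, c], _, h =>
    exact gadget_complete σ m a b c (by simp_all) (by simp_all) (by simp_all)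
      (by simpa [ClauseSat] using h)
  | _ :: _ :: _ :: _ :: _, h3, _ => simp at h3; omega

lemma build_sound {σ : ℕ → Bool} {φ : CNF} {m : ℕ} (h : CNFSat σ (build m φ)) : CNFSat σ φ := by
  induction φ generalizing m with
  | nil => simp [CNFSat]
  | cons c φ ih =>
    have h1 : CNFSat σ (clauseGadget m c) := fun e he => h e (by simp [build, he])
    have h2 : CNFSat σ (build (m + 9) φ) := fun e he => h e (by simp [build, he])
    intro e he
    obtain rfl | he := List.mem_cons.1 he
    · exact clauseGadget_sound h1
    · exact ih h2 e he

lemma build_complete (φ : CNF) (h3 : ∀ c ∈ φ, c.length ≤ 3) (m : ℕ)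
    (hv : ∀ c ∈ φ, ∀ l ∈ c, l.1 < m) (σ : ℕ → Bool) (h : CNFSat σ φ) :
    ∃ τ : ℕ → Bool, (∀ i < m, τ i = σ i) ∧ CNFSat τ (build m φ) := by
  induction φ generalizing m σ with
  | nil => exact ⟨σ, by simp, by simp [CNFSat, build]⟩
  | cons c φ ih =>
    have hcv : ∀ l ∈ c, l.1 < m := hv c (by simp)
    obtain ⟨τ, hτ, hg⟩ := clauseGadget_complete σ m c (h3 c (by simp)) hcv (h c (by simp))
    have hφ : CNFSat τ φ := fun e he =>
      clauseSat_congr (fun l hl => hτ _ (hv e (by simp [he]) l hl)) (h e (by simp [he]))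
    obtain ⟨ρ, hρ, hb⟩ := ih (fun e he => h3 e (by simp [he])) (m + 9)
      (fun e he l hl => (hv e (by simp [he]) l hl).trans_le (by omega)) τ hφ
    refine ⟨ρ, fun i hi => (hρ i (by omega)).trans (hτ i hi), fun e he => ?_⟩
    rw [build, List.mem_append] at he
    obtain he | he := he
    · exact clauseSat_congr (fun l hl => hρ _ (clauseGadget_vars m c hcv e he l hl)) (hg e he)
    · exact hb e he

lemma exists_var_bound (φ : CNF) : ∃ N : ℕ, ∀ c ∈ φ, ∀ l ∈ c, l.1 < N := by
  refine ⟨(φ.flatten.map Prod.fst).sum + 1, fun c hc l hl => Nat.lt_succ_of_le ?_⟩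
  exact List.single_le_sum (by simp) _
    (List.mem_map_of_mem (List.mem_flatten.2 ⟨c, hc, hl⟩))

/-- The reduction from 3-SAT to NAS-SAT preserves satisfying assignments on
the original variables: there are a NAS-CNF formula `ψ` and a bound `N` with
all variables of `φ` of index `< N` (fresh variables of `ψ` having index
`≥ N`), such that an assignment `σ` satisfies `φ` iff some assignment `σ'`
agreeing with `σ` on all indices `< N` satisfies `ψ`. -/
theorem threeSat_to_nasSat_assignments (φ : CNF) (h3 : ∀ c ∈ φ, c.length ≤ 3) :
    ∃ (ψ : CNF) (N : ℕ),
      NASForm ψ ∧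
      (∀ c ∈ φ, ∀ l ∈ c, l.1 < N) ∧
      (∀ σ : ℕ → Bool,
        CNFSat σ φ ↔ ∃ σ' : ℕ → Bool, (∀ i < N, σ' i = σ i) ∧ CNFSat σ' ψ) := by
  obtain ⟨N, hN⟩ := exists_var_bound φ
  refine ⟨build N φ, N, ⟨fun c hc => (build_shape φ N c hc).1, fun c hc => (build_shape φ N c hc).2,
    fun l => countP_build_le φ N l⟩, hN, fun σ => ⟨build_complete φ h3 N hN σ, ?_⟩⟩
  rintro ⟨τ, hτ, h⟩ c hc
  exact clauseSat_congr (fun l hl => (hτ _ (hN c hc l hl)).symm) (build_sound h c hc)
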